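/- Let K be a field of characteristic different from 2 and let L be a quadratic field extension of K. Let B be a central simple K-algebra whose Brauer class is 2-torsion (i.e., B ⊗_K B is Brauer-equivalent to K), and suppose that the base change B ⊗_K L is Brauer-equivalent to a quaternion algebra over L (i.e., there exist x, y ∈ L^× such that B ⊗_K L is Brauer-equivalent to the quaternion algebra (x,y)_L). Then there exist a, b ∈ K^× such that the base change (a,b)_L of the quaternion algebra (a,b)_K is Brauer-equivalent to B ⊗_K L. -/

import Mathlib

open scoped TensorProduct Quaternion

/-- Two (associative, unital) algebras over a field `F` are *Brauer-equivalent* if they become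
isomorphic as `F`-algebras after tensoring with (i.e. taking) matrix algebras of suitable
positive sizes. -/
def BrauerEquivalent (F : Type*) [Field F] (A B : Type*)
    [Ring A] [Algebra F A] [Ring B] [Algebra F B] : Prop :=
  ∃ n m : ℕ, 0 < n ∧ 0 < m ∧
    Nonempty (Matrix (Fin n) (Fin n) A ≃ₐ[F] Matrix (Fin m) (Fin m) B)

/-!
If `(x, y)_L` is split, then `a = b = 1` works, so assume that `Q = (x, y)_L` is a division algebra.
The class of `B` being `2`-torsion, some `M_s(B)` has an antiautomorphism. After base change to `L`
it becomes an `L`-linear antiautomorphism `γ` of a matrix algebra `M_n(Q)`, and it commutes with the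
`σ`-semilinear involutive automorphism `θ` coming from the nontrivial `σ ∈ Gal(L/K)`.

Write `θ(X) = G φ(X) G⁻¹` with `φ` a `σ`-semilinear endomorphism of `Q` applied entrywise. Then
`G φ(G)` is a scalar matrix `u`, where `φ(u) = u` and `φ²(q) = u⁻¹ q u`. Writing also
`γ(X) = H X* H⁻¹`, the relation `γθ = θγ` forces `u u* = m σ(m)` for some `m ∈ L`. Put `v = m + u`;
the quadratic equation satisfied by `u` gives `v φ(v) ∈ L u`, which is exactly the condition for
`ψ(q) = v φ(q) v⁻¹` to be an involution; if `v = 0`, then `u` is central and `φ` is already one.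

Finally, `L`-subspaces of `Q` stable under the `σ`-semilinear involution `ψ` contain nonzero fixed
vectors. This produces `ψ`-fixed anticommuting pure quaternions `i` and `j`, whose squares are fixed
by `σ`, hence lie in `K`.
-/

section CentralSimple

variable {F A : Type*} [Field F] [Ring A] [Algebra F A]

section Bimodule

attribute [local instance] TensorProduct.Algebra.module

theorem tmul_op_smul (a b z : A) : (a ⊗ₜ[F] MulOpposite.op b) • z = a * z * b :=
  AlgHom.mulLeftRight_apply F A a (MulOpposite.op b) z

theorem isSimpleModule_tensor_mulOpposite [IsSimpleRing A] :
    IsSimpleModule (A ⊗[F] Aᵐᵒᵖ) A := by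
  rw [isSimpleModule_iff]
  refine { eq_bot_or_eq_top := fun N => ?_ }
  have left_mem (a : A) {z : A} (hz : z ∈ N) : a * z ∈ N := by
    simpa [tmul_op_smul, -MulOpposite.op_one] using N.smul_mem (a ⊗ₜ[F] MulOpposite.op 1) hz
  have right_mem (a : A) {z : A} (hz : z ∈ N) : z * a ∈ N := by
    simpa [tmul_op_smul, -MulOpposite.op_one] using N.smul_mem (1 ⊗ₜ[F] MulOpposite.op a) hz
  let I : TwoSidedIdeal A := .mk' N N.zero_mem N.add_mem N.neg_mem (left_mem _) (right_mem _)
  have mem_I {z : A} : z ∈ I ↔ z ∈ N := by simp [I, TwoSidedIdeal.mem_mk']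
  rcases eq_bot_or_eq_top I with h | h
  · exact .inl (eq_bot_iff.2 fun z hz => by simpa [h] using mem_I.2 hz)
  · exact .inr (eq_top_iff.2 fun z _ => mem_I.1 (h ▸ TwoSidedIdeal.mem_top A))

theorem exists_eq_smul_of_end_tensor_mulOpposite [Algebra.IsCentral F A]
    (g : Module.End (A ⊗[F] Aᵐᵒᵖ) A) : ∃ c : F, ∀ z, g z = c • z := by
  have left_mul z : g z = z * g 1 := by
    simpa [tmul_op_smul, -map_smul, -MulOpposite.op_one] using
      g.map_smul (z ⊗ₜ[F] MulOpposite.op 1) 1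
  have right_mul z : g z = g 1 * z := by
    simpa [tmul_op_smul, -map_smul, -MulOpposite.op_one] using
      g.map_smul (1 ⊗ₜ[F] MulOpposite.op z) 1
  have g_one_mem : g 1 ∈ Subalgebra.center F A :=
    Subalgebra.mem_center_iff.2 fun z => by rw [← left_mul, ← right_mul]
  obtain ⟨c, hc⟩ := (Algebra.IsCentral.mem_center_iff F).1 g_one_mem
  exact ⟨c, fun z => by rw [right_mul, hc, Algebra.smul_def]⟩

theorem mulLeftRight_surjective [FiniteDimensional F A] [Algebra.IsCentral F A] [IsSimpleRing A] :
    Function.Surjective (AlgHom.mulLeftRight F A) := by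
  classical
  have := isSimpleModule_tensor_mulOpposite (F := F) (A := A)
  intro f
  let f' : Module.End (Module.End (A ⊗[F] Aᵐᵒᵖ) A) A :=
    { f with
      map_smul' := fun g z => by
        obtain ⟨c, hc⟩ := exists_eq_smul_of_end_tensor_mulOpposite g
        simp [hc] }
  let basis := Module.finBasis F A
  obtain ⟨r, hr⟩ := jacobson_density f' (Finset.univ.image basis)
  exact ⟨r, basis.ext fun i => (hr _ (by simp)).symm⟩

end Bimodule

variable (F A) in
theorem isAzumaya_of_isCentral_of_isSimpleRing [FiniteDimensional F A] [Algebra.IsCentral F A]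
    [IsSimpleRing A] : IsAzumaya F A where
  bij := by
    refine ⟨(LinearMap.injective_iff_surjective_of_finrank_eq_finrank
      (f := (AlgHom.mulLeftRight F A).toLinearMap) ?_).2 mulLeftRight_surjective,
      mulLeftRight_surjective⟩
    rw [Module.finrank_tensorProduct, Module.finrank_linearMap,
      (MulOpposite.opLinearEquiv F).symm.finrank_eq]

/-- Skolem–Noether: the automorphism `α ⊗ id` of `A ⊗ Aᵐᵒᵖ ≃ End A` is conjugation by a linear
automorphism `T` of `A`, and `T 1` is the conjugating unit. -/
theorem exists_unit_conj_of_algEquiv [IsAzumaya F A] (α : A ≃ₐ[F] A) :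
    ∃ w : Aˣ, ∀ a, α a = w * a * ↑w⁻¹ := by
  let M := AlgEquiv.ofBijective (AlgHom.mulLeftRight F A) IsAzumaya.bij
  obtain ⟨T, hT⟩ := (M.symm.trans
    ((Algebra.TensorProduct.congr α AlgEquiv.refl).trans M)).eq_linearEquivConjAlgEquiv
  have T_mul (a z b : A) : T (a * z * b) = α a * T z * b := by
    simpa [M] using congr($hT (M (a ⊗ₜ MulOpposite.op b)) (T z)).symm
  have T_left a : T a = α a * T 1 := by simpa using T_mul a 1 1
  have T_right a : T a = T 1 * a := by simpa using T_mul 1 1 a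
  obtain ⟨b, hb⟩ := T.surjective 1
  have hαb : α b * T 1 = 1 := by rw [← T_left, hb]
  have hTb : T 1 * b = 1 := by rw [← T_right, hb]
  let w : Aˣ := ⟨T 1, b, hTb, left_inv_eq_right_inv hαb hTb ▸ hαb⟩
  refine ⟨w, fun a => ?_⟩
  rw [Units.eq_mul_inv_iff_mul_eq]
  exact (T_left a).symm.trans (T_right a)

theorem exists_unit_conj_star_of_antiautomorphism [IsAzumaya F A] [StarRing A]
    (star_algebraMap : ∀ c : F, star (algebraMap F A c) = algebraMap F A c) (γ : A ≃ₐ[F] Aᵐᵒᵖ) :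
    ∃ H : Aˣ, ∀ X, (γ X).unop = H * star X * ↑H⁻¹ := by
  let S : A ≃ₐ[F] Aᵐᵒᵖ := .ofRingEquiv (f := starRingEquiv) fun c => by simp [star_algebraMap]
  obtain ⟨H, hH⟩ := exists_unit_conj_of_algEquiv (AlgEquiv.unop (S.symm.trans γ))
  refine ⟨H, fun X => ?_⟩
  rw [← hH]
  exact congrArg (fun z => (γ z).unop) (S.symm_apply_apply X).symm

end CentralSimple

section MatrixAlgebras

open Algebra.TensorProduct (congr comm assoc lid)

variable {ι κ μ : Type*} [Fintype ι] [DecidableEq ι] [Fintype κ] [DecidableEq κ] [Fintype μ]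
  [DecidableEq μ]

theorem nonempty_matrix_algEquiv_of_tensor_split {F B C : Type*} [CommRing F] [Ring B]
    [Algebra F B] [Ring C] [Algebra F C] (e : Matrix ι ι (B ⊗[F] B) ≃ₐ[F] Matrix κ κ F)
    (f : B ⊗[F] C ≃ₐ[F] Matrix μ μ F) :
    Nonempty (Matrix κ κ C ≃ₐ[F] Matrix (ι × μ) (ι × μ) B) :=
  let splitBB : Matrix κ κ C ≃ₐ[F] Matrix ι ι (B ⊗[F] B) ⊗[F] C :=
    ((matrixEquivTensor κ F C).trans (comm F C _)).trans (congr e.symm .refl)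
  let reassociate : Matrix ι ι (B ⊗[F] B) ⊗[F] C ≃ₐ[F] Matrix ι ι F ⊗[F] (B ⊗[F] (B ⊗[F] C)) :=
    (congr ((matrixEquivTensor ι F (B ⊗[F] B)).trans (comm F _ _)) .refl).trans
      ((assoc F F F _ _ _).trans (congr .refl (assoc F F F _ _ _)))
  let splitBC : B ⊗[F] (B ⊗[F] C) ≃ₐ[F] Matrix μ μ B :=
    (congr .refl f).trans (matrixEquivTensor μ F B).symm
  let kronecker : Matrix ι ι F ⊗[F] Matrix μ μ B ≃ₐ[F] Matrix (ι × μ) (ι × μ) B :=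
    (Matrix.kroneckerTMulAlgEquiv ι μ F F F B).trans (lid F B).mapMatrix
  ⟨splitBB.trans (reassociate.trans ((congr .refl splitBC).trans kronecker))⟩

theorem exists_matrix_algEquiv_op {F B : Type*} [Field F] [Ring B] [Algebra F B] [IsAzumaya F B]
    (htors : BrauerEquivalent F (B ⊗[F] B) F) :
    ∃ s : ℕ, 0 < s ∧
      Nonempty (Matrix (Fin s) (Fin s) B ≃ₐ[F] (Matrix (Fin s) (Fin s) B)ᵐᵒᵖ) := by
  obtain ⟨r, s, -, hs, ⟨e⟩⟩ := htors
  have := (FaithfulSMul.algebraMap_injective F B).nontrivial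
  let d := Module.finrank F B
  have splitEnveloping : B ⊗[F] Bᵐᵒᵖ ≃ₐ[F] Matrix (Fin d) (Fin d) F :=
    (AlgEquiv.ofBijective _ IsAzumaya.bij).trans
      (LinearMap.toMatrixAlgEquiv (Module.finBasis F B))
  obtain ⟨f⟩ := nonempty_matrix_algEquiv_of_tensor_split e splitEnveloping
  have s_eq : s = r * d := by
    have h := f.toLinearEquiv.finrank_eq
    rw [Module.finrank_matrix, Module.finrank_matrix,
      (MulOpposite.opLinearEquiv F).symm.finrank_eq] at h
    have hd : 0 < Module.finrank F B := Module.finrank_pos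
    simpa [hd.ne', d, Nat.mul_self_inj] using h
  let index : Fin r × Fin d ≃ Fin s := finProdFinEquiv.trans (finCongr s_eq.symm)
  exact ⟨s, hs, ⟨((Matrix.reindexAlgEquiv F B index).symm.trans f.symm).trans
    AlgEquiv.mopMatrix⟩⟩

/-- Base change commutes with matrices: `L ⊗ Mₙ(B) ≃ Mₙ(L ⊗ B)` as `L`-algebras. This is the
Kronecker isomorphism for `L = M₁(L)`. -/
def baseChangeMatrixAlgEquiv {K L B : Type*} [CommRing K] [CommRing L] [Algebra K L] [Ring B]
    [Algebra K B] : L ⊗[K] Matrix ι ι B ≃ₐ[L] Matrix ι ι (L ⊗[K] B) :=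
  (congr (Matrix.uniqueAlgEquiv (m := Unit)).symm .refl).trans <|
    (Matrix.kroneckerTMulAlgEquiv Unit ι K L L B).trans
      (Matrix.reindexAlgEquiv L (L ⊗[K] B) (Equiv.punitProd ι))

theorem nonempty_baseChange_matrix_matrix_algEquiv {K L B Q : Type*} [CommRing K] [CommRing L]
    [Algebra K L] [Ring B] [Algebra K B] [Ring Q] [Algebra L Q]
    (e : Matrix ι ι (L ⊗[K] B) ≃ₐ[L] Matrix κ κ Q) :
    Nonempty (L ⊗[K] Matrix ι ι (Matrix μ μ B) ≃ₐ[L] Matrix (μ × κ) (μ × κ) Q) :=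
  let swap : Matrix ι ι (Matrix μ μ B) ≃ₐ[K] Matrix μ μ (Matrix ι ι B) :=
    (Matrix.compAlgEquiv ι μ B K).trans ((Matrix.reindexAlgEquiv K B (Equiv.prodComm ι μ)).trans
      (Matrix.compAlgEquiv μ ι B K).symm)
  ⟨(congr .refl swap).trans <| baseChangeMatrixAlgEquiv.trans <|
    (baseChangeMatrixAlgEquiv.trans e).mapMatrix.trans (Matrix.compAlgEquiv μ κ Q L)⟩

end MatrixAlgebras

section MatrixEndomorphisms

open Matrix

variable {R ι : Type*} [Fintype ι] [DecidableEq ι]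

theorem exists_map_eq_mapMatrix_of_map_single_one [Ring R] [Nonempty ι]
    (f : Matrix ι ι R →+* Matrix ι ι R) (hf : ∀ i j, f (single i j 1) = single i j 1) :
    ∃ φ : R →+* R, f = φ.mapMatrix := by
  have map_scalar_mem (r : R) : ∃ r', scalar ι r' = f (scalar ι r) :=
    mem_range_scalar_of_commute_single fun i j _ => by
      have h : Commute (single i j 1) (scalar ι r) := (scalar_commute_iff.2 (by simp)).symm
      simpa [hf] using h.map f
  choose φ₀ map_scalar using map_scalar_mem
  let φ : R →+* R :=
    { toFun := φ₀
      map_one' := by simp [← scalar_inj (n := ι), map_scalar]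
      map_mul' := by simp [← scalar_inj (n := ι), map_scalar, -scalar_apply]
      map_zero' := by simp [← scalar_inj (n := ι), map_scalar]
      map_add' := by simp [← scalar_inj (n := ι), map_scalar, -scalar_apply] }
  refine ⟨φ, RingHom.ext fun X => ?_⟩
  have eq_sum (Y : Matrix ι ι R) : Y = ∑ i, ∑ j, scalar ι (Y i j) * single i j 1 := by
    conv_lhs => rw [matrix_eq_sum_single Y]
    simp [← smul_eq_diagonal_mul]
  rw [eq_sum (φ.mapMatrix X)]
  conv_lhs => rw [eq_sum X]
  simp only [map_sum, map_mul, hf, ← map_scalar, RingHom.mapMatrix_apply, map_apply]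
  rfl

theorem exists_unit_forall_map_single_one_mul {D : Type*} [DivisionRing D] [Nonempty ι]
    (f : Matrix ι ι D →+* Matrix ι ι D) :
    ∃ G : (Matrix ι ι D)ˣ, ∀ i j, f (single i j (1 : D)) * G = G * single i j (1 : D) := by
  obtain ⟨o⟩ := ‹Nonempty ι›
  obtain ⟨r, p, hrp⟩ : ∃ r p, f (single o o 1) r p ≠ 0 := by
    by_contra! h
    have := congrFun (congrFun ((map_eq_zero_iff f f.injective).1 (Matrix.ext h)) o) o
    simp at this
  let G : Matrix ι ι D := ∑ k, f (single k o 1) * single p k 1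
  have map_mul_G i j : f (single i j 1) * G = f (single i o 1) * single p j 1 := by
    simp only [G, Finset.mul_sum, ← mul_assoc, ← map_mul]
    rw [Finset.sum_eq_single j] <;> simp +contextual [eq_comm]
  have G_mul i j : G * single i j 1 = f (single i o 1) * single p j 1 := by
    simp only [G, Finset.sum_mul, mul_assoc]
    rw [Finset.sum_eq_single i] <;> simp +contextual [eq_comm]
  have G_regular : IsLeftRegular G := by
    rw [isLeftRegular_iff_right_eq_zero_of_mul]
    intro X hX
    ext i j
    have h : (f (single o o 1) * single p i 1 * X : Matrix ι ι D) r j = 0 := by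
      rw [← map_mul_G, mul_assoc, hX, mul_zero, Matrix.zero_apply]
    rw [mul_assoc, mul_apply, Finset.sum_eq_single p (by simp +contextual) (by simp)] at h
    simpa [hrp] using h
  obtain ⟨G', hG'⟩ := IsArtinianRing.isUnit_iff_isLeftRegular.2 G_regular
  exact ⟨G', fun i j => by rw [hG', map_mul_G, G_mul]⟩

theorem exists_eq_conj_mapMatrix {D : Type*} [DivisionRing D] [Nonempty ι]
    (f : Matrix ι ι D →+* Matrix ι ι D) :
    ∃ (G : (Matrix ι ι D)ˣ) (φ : D →+* D),
      ∀ X : Matrix ι ι D, f X = G.val * φ.mapMatrix X * G⁻¹.val := by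
  obtain ⟨G, hG⟩ := exists_unit_forall_map_single_one_mul f
  let conj : Matrix ι ι D →+* Matrix ι ι D :=
    (MulSemiringAction.toRingHom _ _ (ConjAct.toConjAct G⁻¹)).comp f
  have conj_apply (X : Matrix ι ι D) : conj X = G⁻¹.val * f X * G.val := by
    simp [conj, ConjAct.units_smul_def]
  obtain ⟨φ, hφ⟩ := exists_map_eq_mapMatrix_of_map_single_one conj fun i j => by
    simp [conj_apply, mul_assoc, hG]
  refine ⟨G, φ, fun X => ?_⟩
  simp [← hφ, conj_apply, mul_assoc]

end MatrixEndomorphisms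

section TwistedInvolutions

variable {A : Type*} [Ring A] {θ Φ : A →+* A} {G : Aˣ}

theorem mul_cocycle_of_involutive (hθ : ∀ X, θ X = G * Φ X * ↑G⁻¹) (hθ₂ : Function.Involutive θ)
    (X : A) : X * (G * Φ G) = G * Φ G * Φ (Φ X) := by
  have hΦG : Φ ↑G⁻¹ * Φ G = 1 := by rw [← map_mul, Units.inv_mul, map_one]
  calc X * (G * Φ G) = θ (θ X) * (G * Φ G) := by rw [hθ₂]
    _ = G * Φ G * Φ (Φ X) * (Φ ↑G⁻¹ * (↑G⁻¹ * G) * Φ G) := by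
      simp only [hθ, map_mul, mul_assoc]
    _ = G * Φ G * Φ (Φ X) := by rw [Units.inv_mul, mul_one, hΦG, mul_one]

theorem map_cocycle_of_involutive (hθ : ∀ X, θ X = G * Φ X * ↑G⁻¹) (hθ₂ : Function.Involutive θ) :
    Φ (G * Φ G) = G * Φ G := by
  apply G.isUnit.mul_left_cancel
  rw [mul_cocycle_of_involutive hθ hθ₂, map_mul, mul_assoc]

theorem surjective_of_involutive_conj (hθ : ∀ X, θ X = G * Φ X * ↑G⁻¹)
    (hθ₂ : Function.Involutive θ) : Function.Surjective Φ := fun X => by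
  obtain ⟨Y, hY⟩ := hθ₂.surjective (G * X * ↑G⁻¹)
  rw [hθ] at hY
  exact ⟨Y, by simpa using hY⟩

theorem map_mem_center_of_surjective (hΦ : Function.Surjective Φ) {Z : A} (hZ : Z ∈ Set.center A) :
    Φ Z ∈ Set.center A := by
  refine Semigroup.mem_center_iff.2 fun X => ?_
  obtain ⟨Y, rfl⟩ := hΦ X
  rw [← map_mul, ← map_mul, Semigroup.mem_center_iff.1 hZ]

variable [StarRing A] {γ : A → A} {H : Aˣ}

theorem exists_center_mul_map_mul_star_eq (hθ : ∀ X, θ X = G * Φ X * ↑G⁻¹)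
    (hθ₂ : Function.Involutive θ) (hΦ : ∀ X, Φ (star X) = star (Φ X))
    (hγ : ∀ X, γ X = H * star X * ↑H⁻¹)
    (hγθ : Function.Commute γ θ) :
    ∃ Z ∈ Set.center A, G * Φ H * star (G : A) = Z * H := by
  let N : Aˣ := H * (star G)⁻¹
  let P : Aˣ := G * Units.map Φ H
  have commute_map (X : A) : Commute (↑(N⁻¹ * P) : A) (Φ X) := by
    have h : P * Φ X * ↑P⁻¹ = N * Φ X * ↑N⁻¹ := by
      calc P * Φ X * ↑P⁻¹ = θ (γ (star X)) := by
            rw [hγ, hθ]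
            simp [P, mul_assoc]
        _ = γ (θ (star X)) := (hγθ (star X)).symm
        _ = N * Φ X * ↑N⁻¹ := by
            rw [hγ, hθ]
            simp [N, hΦ, mul_assoc]
    rw [Units.mul_inv_eq_iff_eq_mul] at h
    simp [Commute, SemiconjBy, mul_assoc, h]
  have hcenter : (↑(N⁻¹ * P) : A) ∈ Set.center A := by
    refine Semigroup.mem_center_iff.2 fun X => ?_
    obtain ⟨Y, rfl⟩ := surjective_of_involutive_conj hθ hθ₂ X
    exact (commute_map Y).symm
  refine ⟨_, hcenter, ?_⟩
  calc G * Φ H * star (G : A) = N * ↑(N⁻¹ * P) * star (G : A) := by simp [P]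
    _ = ↑(N⁻¹ * P) * (N * star G : Aˣ) := by
      rw [Semigroup.mem_center_iff.1 hcenter, mul_assoc, Units.val_mul (N : Aˣ), Units.coe_star]
    _ = ↑(N⁻¹ * P) * H := by simp only [N, inv_mul_cancel_right]

theorem exists_center_cocycle_mul_star (hθ : ∀ X, θ X = G * Φ X * ↑G⁻¹)
    (hθ₂ : Function.Involutive θ) (hΦ : ∀ X, Φ (star X) = star (Φ X))
    (hγ : ∀ X, γ X = H * star X * ↑H⁻¹) (hγθ : Function.Commute γ θ) :
    ∃ Z ∈ Set.center A, G * Φ G * star (G * Φ G) = Z * Φ Z := by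
  obtain ⟨Z, hZ, hZH⟩ := exists_center_mul_map_mul_star_eq hθ hθ₂ hΦ hγ hγθ
  refine ⟨Z, hZ, H.isUnit.mul_left_cancel ?_⟩
  have hZX := Semigroup.mem_center_iff.1 hZ
  have hΦZX := Semigroup.mem_center_iff.1
    (map_mem_center_of_surjective (surjective_of_involutive_conj hθ hθ₂) hZ)
  calc H * (G * Φ G * star (G * Φ G))
      = G * Φ (G * Φ H * star (G : A)) * star (G : A) := by
        rw [← mul_assoc, mul_cocycle_of_involutive hθ hθ₂]
        simp only [map_mul, star_mul, hΦ, mul_assoc]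
    _ = Φ Z * (G * Φ H * star (G : A)) := by
        conv_lhs => rw [hZH, map_mul, ← mul_assoc (G : A), hΦZX]
        simp only [mul_assoc]
    _ = H * (Z * Φ Z) := by
        rw [hZH, ← hΦZX, ← hZX, mul_assoc]

end TwistedInvolutions

section SemilinearInvolution

variable {L A : Type*} [CommRing L] [Ring A] [Algebra L A]

theorem involutive_of_mul_cocycle {θ Φ : A →+* A} {G : Aˣ} (hθ : ∀ X, θ X = G * Φ X * ↑G⁻¹)
    (hG : ∀ X, X * (G * Φ G) = G * Φ G * Φ (Φ X)) : Function.Involutive θ := by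
  intro X
  have hΦG : Φ G * Φ ↑G⁻¹ = 1 := by rw [← map_mul, Units.mul_inv, map_one]
  calc θ (θ X) = G * Φ G * Φ (Φ X) * (Φ ↑G⁻¹ * ↑G⁻¹) := by simp only [hθ, map_mul, mul_assoc]
    _ = X * (G * (Φ G * Φ ↑G⁻¹) * ↑G⁻¹) := by simp only [← hG, mul_assoc]
    _ = X := by rw [hΦG, mul_one, Units.mul_inv, mul_one]

theorem exists_semilinear_conj {σ : L →+* L} {φ : A →+* A}
    (hφ : ∀ l, φ (algebraMap L A l) = algebraMap L A (σ l)) (v : Aˣ) :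
    ∃ ψ : A →+* A, (∀ l, ψ (algebraMap L A l) = algebraMap L A (σ l)) ∧
      ∀ q, ψ q = v * φ q * ↑v⁻¹ := by
  refine ⟨(MulSemiringAction.toRingHom (ConjAct Aˣ) A (ConjAct.toConjAct v)).comp φ,
    fun l => ?_, fun _ => rfl⟩
  change v * φ (algebraMap L A l) * ↑v⁻¹ = _
  rw [hφ, ← Algebra.commutes, Units.mul_inv_cancel_right]

variable [StarRing A]

theorem add_mul_map_add_of_mul_star {σ : L →+* L} {φ : A →+* A}
    (hφ : ∀ l, φ (algebraMap L A l) = algebraMap L A (σ l)) {u : A} (hφu : φ u = u) {m t : L}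
    (htr : u + star u = algebraMap L A t) (hnorm : u * star u = algebraMap L A (m * σ m)) :
    (algebraMap L A m + u) * φ (algebraMap L A m + u) = algebraMap L A (m + σ m + t) * u := by
  have huu : u * u = algebraMap L A t * u - algebraMap L A (m * σ m) := by
    rw [← hnorm, Algebra.commutes, ← htr, mul_add, add_sub_cancel_right]
  rw [map_add, hφ, hφu, mul_add, add_mul, add_mul, huu, ← Algebra.commutes (σ m) u]
  simp only [map_add, map_mul, add_mul]
  abel

theorem exists_semilinear_involution {σ : L →+* L} {φ : A →+* A}
    (hφ : ∀ l, φ (algebraMap L A l) = algebraMap L A (σ l)) {u : A} (hu : IsUnit u)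
    (hφφ : ∀ q, q * u = u * φ (φ q)) (hφu : φ u = u) {m t : L}
    (htr : u + star u = algebraMap L A t) (hnorm : u * star u = algebraMap L A (m * σ m))
    (hm : IsUnit (algebraMap L A m + u) ∨ algebraMap L A m + u = 0) :
    ∃ ψ : A →+* A, (∀ l, ψ (algebraMap L A l) = algebraMap L A (σ l)) ∧
      Function.Involutive ψ := by
  rcases hm with ⟨v, hv⟩ | hm
  · obtain ⟨ψ, hψ, hψφ⟩ := exists_semilinear_conj hφ v
    refine ⟨ψ, hψ, involutive_of_mul_cocycle hψφ fun q => ?_⟩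
    rw [hv, add_mul_map_add_of_mul_star hφ hφu htr hnorm, ← mul_assoc, ← Algebra.commutes,
      mul_assoc, hφφ, mul_assoc]
  · refine ⟨φ, hφ, fun q => hu.mul_left_cancel ?_⟩
    rw [← hφφ, eq_neg_of_add_eq_zero_right hm, ← map_neg, Algebra.commutes]

end SemilinearInvolution

section QuaternionAlgebras

variable {L : Type*} [Field L] {x y : L}

theorem quaternion_four_mul_re (hx : x ≠ 0) (hy : y ≠ 0) (q : ℍ[L,x,y]) :
    let i : ℍ[L,x,y] := ⟨0, 1, 0, 0⟩
    let j : ℍ[L,x,y] := ⟨0, 0, 1, 0⟩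
    let k : ℍ[L,x,y] := ⟨0, 0, 0, 1⟩
    algebraMap L ℍ[L,x,y] (4 * q.re) =
      q + x⁻¹ • (i * q * i) + y⁻¹ • (j * q * j) - (x * y)⁻¹ • (k * q * k) := by
  rw [QuaternionAlgebra.coe_algebraMap]
  ext <;> simp [-QuaternionAlgebra.coe_mul] <;> field_simp <;> ring

theorem exists_re_mul_ne_zero (hx : x ≠ 0) (hy : y ≠ 0) {q : ℍ[L,x,y]} (hq : q ≠ 0) :
    ∃ p : ℍ[L,x,y], (p * q).re ≠ 0 := by
  by_contra! h
  refine hq (QuaternionAlgebra.ext ?_ ?_ ?_ ?_)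
  · simpa using h 1
  · simpa [hx] using h ⟨0, 1, 0, 0⟩
  · simpa [hy] using h ⟨0, 0, 1, 0⟩
  · simpa [hx, hy] using h ⟨0, 0, 0, 1⟩

theorem isSimpleRing_quaternion (h2 : (2 : L) ≠ 0) (hx : x ≠ 0) (hy : y ≠ 0) :
    IsSimpleRing ℍ[L,x,y] := by
  refine isSimpleRing_iff_isTwoSided_imp.2 ⟨inferInstance, fun I _ => ?_⟩
  refine or_iff_not_imp_left.2 fun hI => ?_
  obtain ⟨q, hqI, hq⟩ := Submodule.exists_mem_ne_zero_of_ne_bot hI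
  obtain ⟨p, hp⟩ := exists_re_mul_ne_zero hx hy hq
  have hmem : algebraMap L ℍ[L,x,y] (4 * (p * q).re) ∈ I := by
    rw [quaternion_four_mul_re hx hy]
    have hpq := I.mul_mem_left p hqI
    have hmul (a b : ℍ[L,x,y]) (c : L) : c • (a * (p * q) * b) ∈ I :=
      Submodule.smul_of_tower_mem I c (I.mul_mem_right b (I.mul_mem_left a hpq))
    exact I.sub_mem (I.add_mem (I.add_mem hpq (hmul _ _ _)) (hmul _ _ _)) (hmul _ _ _)
  have h4 : (4 : L) ≠ 0 := by simpa [show (4 : L) = 2 * 2 by norm_num] using h2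
  exact I.eq_top_of_isUnit_mem hmem
    ((IsUnit.mk0 _ (mul_ne_zero h4 hp)).map (algebraMap L ℍ[L,x,y]))

theorem isCentral_quaternion (h2 : (2 : L) ≠ 0) (hx : x ≠ 0) :
    Algebra.IsCentral L ℍ[L,x,y] := by
  refine ⟨fun q hq => ?_⟩
  rw [Subalgebra.mem_center_iff] at hq
  have hi := hq ⟨0, 1, 0, 0⟩
  have hj := hq ⟨0, 0, 1, 0⟩
  have imI : q.imI = 0 := by
    simpa [neg_eq_iff_add_eq_zero, ← two_mul, h2] using congrArg QuaternionAlgebra.imK hj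
  have imJ : q.imJ = 0 := by
    simpa [eq_neg_iff_add_eq_zero, ← two_mul, h2] using congrArg QuaternionAlgebra.imK hi
  have imK : q.imK = 0 := by
    simpa [eq_neg_iff_add_eq_zero, ← two_mul, h2, hx] using congrArg QuaternionAlgebra.imJ hi
  exact ⟨q.re, by ext <;> simp [imI, imJ, imK]⟩

theorem quaternion_re_mul_comm (p q : ℍ[L,x,y]) : (p * q).re = (q * p).re := by
  simp only [QuaternionAlgebra.re_mul]
  ring

theorem exists_eq_add_commutators_of_re_eq_zero (h2 : (2 : L) ≠ 0) (hx : x ≠ 0) (hy : y ≠ 0)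
    {q : ℍ[L,x,y]} (hq : q.re = 0) :
    ∃ a b c d : ℍ[L,x,y], q = (a * b - b * a) + (c * d - d * c) := by
  refine ⟨⟨0, 1, 0, 0⟩, ⟨0, 0, q.imK / 2, q.imJ / (2 * x)⟩, ⟨0, 0, 1, 0⟩,
    ⟨0, 0, 0, -q.imI / (2 * y)⟩, ?_⟩
  ext <;> simp [hq] <;> field_simp <;> ring

theorem re_map_eq_of_semilinear (h2 : (2 : L) ≠ 0) (hx : x ≠ 0) (hy : y ≠ 0) {σ : L →+* L}
    {φ : ℍ[L,x,y] →+* ℍ[L,x,y]} (hφ : ∀ l, φ (algebraMap L _ l) = algebraMap L _ (σ l))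
    (q : ℍ[L,x,y]) : (φ q).re = σ q.re := by
  obtain ⟨a, b, c, d, h⟩ := exists_eq_add_commutators_of_re_eq_zero h2 hx hy
    (q := q - algebraMap L _ q.re) (by simp [QuaternionAlgebra.coe_algebraMap])
  have hre := congrArg (fun p => (φ p).re) h
  simp only [map_sub, map_add, map_mul, hφ, QuaternionAlgebra.re_sub, QuaternionAlgebra.re_add,
    quaternion_re_mul_comm (φ b), quaternion_re_mul_comm (φ d), sub_self, add_zero] at hre
  simpa only [QuaternionAlgebra.coe_algebraMap, QuaternionAlgebra.re_coe, sub_eq_zero] using hre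

theorem map_star_of_semilinear (h2 : (2 : L) ≠ 0) (hx : x ≠ 0) (hy : y ≠ 0) {σ : L →+* L}
    {φ : ℍ[L,x,y] →+* ℍ[L,x,y]} (hφ : ∀ l, φ (algebraMap L _ l) = algebraMap L _ (σ l))
    (q : ℍ[L,x,y]) : φ (star q) = star (φ q) := by
  have re_map := re_map_eq_of_semilinear h2 hx hy hφ q
  simp only [QuaternionAlgebra.coe_algebraMap] at hφ
  rw [QuaternionAlgebra.star_eq_two_re_sub, QuaternionAlgebra.star_eq_two_re_sub, map_sub, hφ,
    re_map]
  simp only [zero_mul, add_zero, map_mul, map_ofNat]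

theorem nonempty_quaternion_algEquiv_of_basis {R : Type*} [Ring R] [Algebra L R] [Nontrivial R]
    (h2 : (2 : L) ≠ 0) (hx : x ≠ 0) (hy : y ≠ 0) (hR : Module.finrank L R = 4)
    (B : QuaternionAlgebra.Basis R x 0 y) : Nonempty (ℍ[L,x,y] ≃ₐ[L] R) := by
  have := isSimpleRing_quaternion h2 hx hy
  have : FiniteDimensional L R := Module.finite_of_finrank_pos (by simp [hR])
  have hinj : Function.Injective B.liftHom := B.liftHom.toRingHom.injective
  have hdim : Module.finrank L ℍ[L,x,y] = Module.finrank L R := by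
    rw [hR, QuaternionAlgebra.finrank_eq_four]
  exact ⟨AlgEquiv.ofBijective B.liftHom ⟨hinj,
    (LinearMap.injective_iff_surjective_of_finrank_eq_finrank hdim (f := B.liftHom.toLinearMap)).1
      hinj⟩⟩

theorem nonempty_quaternion_algEquiv_of_anticommute {R : Type*} [Ring R] [Algebra L R]
    [Nontrivial R] (h2 : (2 : L) ≠ 0) (hx : x ≠ 0) (hy : y ≠ 0) (hR : Module.finrank L R = 4)
    {i j : R} (hi : i * i = algebraMap L R x) (hj : j * j = algebraMap L R y)
    (hji : j * i = -(i * j)) : Nonempty (ℍ[L,x,y] ≃ₐ[L] R) :=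
  nonempty_quaternion_algEquiv_of_basis h2 hx hy hR
    { i, j, k := i * j
      i_mul_i := by simp [hi, Algebra.algebraMap_eq_smul_one]
      j_mul_j := by simp [hj, Algebra.algebraMap_eq_smul_one]
      i_mul_j := rfl
      j_mul_i := by simp [hji] }

theorem nonempty_baseChange_quaternion_algEquiv {K : Type*} [Field K] [Algebra K L] {R : Type*}
    [Ring R] [Algebra L R] [Nontrivial R] (h2 : (2 : L) ≠ 0) (hR : Module.finrank L R = 4)
    {a b : K} (ha : a ≠ 0) (hb : b ≠ 0) {i j : R} (hi : i * i = algebraMap L R (algebraMap K L a))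
    (hj : j * j = algebraMap L R (algebraMap K L b)) (hji : j * i = -(i * j)) :
    Nonempty (L ⊗[K] ℍ[K,a,b] ≃ₐ[L] R) := by
  have ha' : algebraMap K L a ≠ 0 := by simpa
  have hb' : algebraMap K L b ≠ 0 := by simpa
  obtain ⟨f⟩ := nonempty_quaternion_algEquiv_of_anticommute h2 ha' hb' hR hi hj hji
  let ι : ℍ[K,a,b] →ₐ[K] L ⊗[K] ℍ[K,a,b] := Algebra.TensorProduct.includeRight
  have hsq (q : ℍ[K,a,b]) (c : K) (h : q * q = algebraMap K _ c) :
      ι q * ι q = algebraMap L _ (algebraMap K L c) := by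
    rw [← map_mul, h, AlgHom.commutes, ← IsScalarTower.algebraMap_apply]
  obtain ⟨g⟩ := nonempty_quaternion_algEquiv_of_anticommute
    (R := L ⊗[K] ℍ[K,a,b]) h2 ha' hb'
    (by rw [Module.finrank_baseChange, QuaternionAlgebra.finrank_eq_four])
    (hsq ⟨0, 1, 0, 0⟩ a (by ext <;> simp)) (hsq ⟨0, 0, 1, 0⟩ b (by ext <;> simp))
    (by rw [← map_mul, ← map_mul, ← map_neg]; exact congrArg ι (by ext <;> simp))
  exact ⟨g.symm.trans f⟩

theorem forall_isUnit_or_eq_zero_or_nonempty_split {K : Type*} [Field K] [Algebra K L]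
    (h2 : (2 : L) ≠ 0) (hx : x ≠ 0) (hy : y ≠ 0) :
    (∀ q : ℍ[L,x,y], IsUnit q ∨ q = 0) ∨ Nonempty (L ⊗[K] ℍ[K,1,1] ≃ₐ[L] ℍ[L,x,y]) := by
  have := isSimpleRing_quaternion h2 hx hy
  have : IsArtinianRing ℍ[L,x,y] := IsArtinianRing.of_finite L _
  obtain ⟨n, hn, D, _, _, hfin, ⟨e⟩⟩ :=
    IsSimpleRing.exists_algEquiv_matrix_divisionRing_finite L ℍ[L,x,y]
  have hdim : n * n * Module.finrank L D = 4 := by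
    have := e.toLinearEquiv.finrank_eq
    rw [QuaternionAlgebra.finrank_eq_four, Module.finrank_matrix] at this
    simpa using this.symm
  have hD : 0 < Module.finrank L D := Module.finrank_pos
  have hn_pos : 0 < n := NeZero.pos n
  have hn_lt : n < 3 := by nlinarith
  obtain rfl | rfl : n = 1 ∨ n = 2 := by omega
  · left
    intro q
    let f : ℍ[L,x,y] ≃+* D := e.toRingEquiv.trans (Matrix.uniqueRingEquiv (m := Fin 1))
    rw [← MulEquiv.isUnit_map f.toMulEquiv, ← map_eq_zero_iff f f.injective]
    exact (eq_or_ne _ _).symm.imp_left isUnit_iff_ne_zero.2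
  · right
    let g : L ≃ₐ[L] D := AlgEquiv.ofBijective (Algebra.ofId L D)
      (Algebra.finrank_eq_one_iff_bijective_algebraMap.1 (by omega))
    obtain ⟨f⟩ := nonempty_baseChange_quaternion_algEquiv (K := K) (L := L)
      (R := Matrix (Fin 2) (Fin 2) L) (a := 1) (b := 1) (i := !![1, 0; 0, -1])
      (j := !![0, 1; 1, 0]) h2 (by simp [Module.finrank_matrix]) one_ne_zero one_ne_zero
      (by simp [Matrix.one_fin_two]) (by simp [Matrix.one_fin_two]) (by simp)
    exact ⟨f.trans (g.mapMatrix.trans e.symm)⟩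

end QuaternionAlgebras

section GaloisDescent

theorem exists_mem_ne_zero_map_eq_self {L V : Type*} [Ring L] [AddCommGroup V] [Module L V]
    [IsDomain L] [Module.IsTorsionFree L V] {σ : L →+* L} (hσ : ∃ l, σ l ≠ l)
    {ψ : V →ₛₗ[σ] V} (hψ : Function.Involutive ψ) {P : Submodule L V}
    (hPψ : ∀ p ∈ P, ψ p ∈ P) (hP : P ≠ ⊥) : ∃ p ∈ P, p ≠ 0 ∧ ψ p = p := by
  obtain ⟨p, hp, hp0⟩ := P.ne_bot_iff.1 hP
  have trace_fixed (v : V) : ψ (v + ψ v) = v + ψ v := by rw [map_add, hψ, add_comm]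
  by_cases h : p + ψ p = 0
  · obtain ⟨l, hl⟩ := hσ
    have trace_smul : l • p + ψ (l • p) = (l - σ l) • p := by
      rw [map_smulₛₗ, eq_neg_of_add_eq_zero_right h, smul_neg, sub_smul, sub_eq_add_neg]
    refine ⟨(l - σ l) • p, P.smul_mem _ hp, smul_ne_zero (sub_ne_zero.2 hl.symm) hp0, ?_⟩
    rw [← trace_smul, trace_fixed]
  · exact ⟨p + ψ p, P.add_mem hp (hPψ p hp), h, trace_fixed p⟩

variable {K L : Type*} [Field K] [Field L] [Algebra K L] {x y : L} {σ : L →+* L}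

theorem quaternion_mul_self_of_re_eq_zero {p : ℍ[L,x,y]} (hp : p.re = 0) :
    p * p = algebraMap L _ (p * p).re := by
  rw [QuaternionAlgebra.coe_algebraMap]
  ext <;> simp [hp] <;> ring

variable {ψ : ℍ[L,x,y] →+* ℍ[L,x,y]}

theorem exists_mul_self_eq_algebraMap_of_map_eq_self (h2 : (2 : L) ≠ 0) (hx : x ≠ 0) (hy : y ≠ 0)
    (hdiv : ∀ q : ℍ[L,x,y], IsUnit q ∨ q = 0)
    (hσ : ∀ l, σ l = l → l ∈ Set.range (algebraMap K L))
    (hψ : ∀ l, ψ (algebraMap L _ l) = algebraMap L _ (σ l)) {p : ℍ[L,x,y]} (hp0 : p ≠ 0)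
    (hp : p.re = 0) (hψp : ψ p = p) :
    ∃ a : K, a ≠ 0 ∧ p * p = algebraMap L _ (algebraMap K L a) := by
  obtain ⟨a, ha⟩ := hσ (p * p).re (by rw [← re_map_eq_of_semilinear h2 hx hy hψ, map_mul, hψp])
  have hpp : p * p = algebraMap L _ (algebraMap K L a) := by
    rw [ha, ← quaternion_mul_self_of_re_eq_zero hp]
  refine ⟨a, ?_, hpp⟩
  rintro rfl
  rw [map_zero, map_zero, ((hdiv p).resolve_right hp0).mul_left_eq_zero] at hpp
  exact hp0 hpp

theorem exists_anticommute_of_re_eq_zero (h2 : (2 : L) ≠ 0) (hx : x ≠ 0) {p : ℍ[L,x,y]}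
    (hp0 : p ≠ 0) (hp : p.re = 0) : ∃ q, q ≠ 0 ∧ q.re = 0 ∧ q * p = -(p * q) := by
  have hcentral := isCentral_quaternion (y := y) h2 hx
  obtain ⟨q, hq⟩ : ∃ q, q * p ≠ p * q := by
    by_contra! h
    obtain ⟨l, rfl⟩ := (Algebra.IsCentral.mem_center_iff L).1 (Subalgebra.mem_center_iff.2 h)
    apply hp0
    rw [QuaternionAlgebra.coe_algebraMap, QuaternionAlgebra.re_coe] at hp
    rw [hp, map_zero]
  refine ⟨q * p - p * q, sub_ne_zero.2 hq, ?_, ?_⟩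
  · rw [QuaternionAlgebra.re_sub, quaternion_re_mul_comm, sub_self]
  · rw [sub_mul, mul_sub, mul_assoc q, ← mul_assoc p p, quaternion_mul_self_of_re_eq_zero hp,
      ← Algebra.commutes, mul_assoc, neg_sub]

theorem nonempty_baseChange_quaternion_algEquiv_of_involution (h2 : (2 : L) ≠ 0) (hx : x ≠ 0)
    (hy : y ≠ 0) (hdiv : ∀ q : ℍ[L,x,y], IsUnit q ∨ q = 0) (hσ_ne : ∃ l, σ l ≠ l)
    (hσ : ∀ l, σ l = l → l ∈ Set.range (algebraMap K L))
    (hψ : ∀ l, ψ (algebraMap L _ l) = algebraMap L _ (σ l)) (hψ₂ : Function.Involutive ψ) :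
    ∃ a b : K, a ≠ 0 ∧ b ≠ 0 ∧ Nonempty (L ⊗[K] ℍ[K,a,b] ≃ₐ[L] ℍ[L,x,y]) := by
  let Ψ : ℍ[L,x,y] →ₛₗ[σ] ℍ[L,x,y] :=
    { ψ with
      map_smul' := fun l q => by
        rw [Algebra.smul_def, Algebra.smul_def, ← hψ]
        exact map_mul ψ _ _ }
  have hΨ : Function.Involutive Ψ := hψ₂
  have re_map := re_map_eq_of_semilinear h2 hx hy hψ
  let pureQuaternions : Submodule L ℍ[L,x,y] := LinearMap.ker (QuaternionAlgebra.reₗ x 0 y)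
  have map_pure (p) (hp : p.re = 0) : (ψ p).re = 0 := by rw [re_map, hp, map_zero]
  have unit_ne : (⟨0, 1, 0, 0⟩ : ℍ[L,x,y]) ≠ 0 := by simp [QuaternionAlgebra.ext_iff]
  obtain ⟨i, hi : i.re = 0, hi0, hψi : ψ i = i⟩ :=
    exists_mem_ne_zero_map_eq_self hσ_ne hΨ (P := pureQuaternions) map_pure
      (Submodule.ne_bot_iff _ |>.2 ⟨_, rfl, unit_ne⟩)
  let anticommuting : Submodule L ℍ[L,x,y] :=
    pureQuaternions ⊓ LinearMap.eqLocus (LinearMap.mulRight L i) (-LinearMap.mulLeft L i)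
  obtain ⟨q, hq0, hq, hqi⟩ := exists_anticommute_of_re_eq_zero h2 hx hi0 hi
  have map_anticommuting (p) (hp : p.re = 0 ∧ p * i = -(i * p)) :
      (ψ p).re = 0 ∧ ψ p * i = -(i * ψ p) :=
    ⟨map_pure p hp.1, by rw [← hψi, ← map_mul, ← map_mul, hp.2, map_neg]⟩
  obtain ⟨j, ⟨hj : j.re = 0, hji : j * i = -(i * j)⟩, hj0, hψj : ψ j = j⟩ :=
    exists_mem_ne_zero_map_eq_self hσ_ne hΨ (P := anticommuting) map_anticommuting
      (Submodule.ne_bot_iff _ |>.2 ⟨q, ⟨hq, hqi⟩, hq0⟩)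
  obtain ⟨a, ha0, ha⟩ :=
    exists_mul_self_eq_algebraMap_of_map_eq_self h2 hx hy hdiv hσ hψ hi0 hi hψi
  obtain ⟨b, hb0, hb⟩ :=
    exists_mul_self_eq_algebraMap_of_map_eq_self h2 hx hy hdiv hσ hψ hj0 hj hψj
  exact ⟨a, b, ha0, hb0, nonempty_baseChange_quaternion_algEquiv h2
    (QuaternionAlgebra.finrank_eq_four x 0 y) ha0 hb0 ha hb hji⟩

end GaloisDescent

section MatrixInvolutions

open Matrix

variable {Q ι : Type*} [Fintype ι] [DecidableEq ι] [Nonempty ι]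

theorem exists_scalar_eq_mul_mapMatrix [Ring Q] [Nontrivial Q] {θ : Matrix ι ι Q →+* Matrix ι ι Q}
    {φ : Q →+* Q} {G : (Matrix ι ι Q)ˣ}
    (hθ : ∀ X : Matrix ι ι Q, θ X = G.val * φ.mapMatrix X * G⁻¹.val)
    (hθ₂ : Function.Involutive θ) :
    ∃ u : Q, u ≠ 0 ∧ (∀ q, q * u = u * φ (φ q)) ∧ φ u = u ∧
      scalar ι u = G.val * φ.mapMatrix G.val := by
  have map_scalar (q : Q) : φ.mapMatrix (scalar ι q) = scalar ι (φ q) := by simp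
  obtain ⟨u, hu⟩ := mem_range_scalar_of_commute_single (M := G.val * φ.mapMatrix G.val)
    fun i j _ => by simpa using! mul_cocycle_of_involutive hθ hθ₂ (single i j 1)
  refine ⟨u, ?_, fun q => ?_, ?_, hu⟩
  · rintro rfl
    rw [map_zero] at hu
    exact not_isUnit_zero (hu ▸ G.isUnit.mul (G.isUnit.map φ.mapMatrix))
  · have h := mul_cocycle_of_involutive hθ hθ₂ (scalar ι q)
    rwa [← hu, map_scalar, map_scalar, ← map_mul, ← map_mul, scalar_inj] at h
  · have h := map_cocycle_of_involutive hθ hθ₂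
    rwa [← hu, map_scalar, scalar_inj] at h

theorem map_algebraMap_of_conj_mapMatrix {L : Type*} [CommRing L] [Ring Q] [Algebra L Q]
    {σ : L →+* L} {θ : Matrix ι ι Q →+* Matrix ι ι Q} {φ : Q →+* Q} {G : (Matrix ι ι Q)ˣ}
    (hG : ∀ X : Matrix ι ι Q, θ X = G.val * φ.mapMatrix X * G⁻¹.val)
    (hθ : ∀ l, θ (algebraMap L _ l) = algebraMap L _ (σ l)) (l : L) :
    φ (algebraMap L Q l) = algebraMap L Q (σ l) := by
  have h : scalar ι (φ (algebraMap L Q l)) = scalar ι (algebraMap L Q (σ l)) := by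
    calc scalar ι (φ (algebraMap L Q l)) = φ.mapMatrix (algebraMap L _ l) := by
          simp [algebraMap_eq_diagonal]
      _ = G⁻¹.val * θ (algebraMap L _ l) * G.val := by
          rw [hG]
          simp [mul_assoc]
      _ = algebraMap L _ (σ l) := by
          rw [hθ, ← Algebra.commutes, mul_assoc, Units.inv_mul, mul_one]
  exact scalar_inj.1 h

theorem exists_semilinear_involution_of_matrix {L : Type*} [Field L] {x y : L} (h2 : (2 : L) ≠ 0)
    (hx : x ≠ 0) (hy : y ≠ 0) (hdiv : ∀ q : ℍ[L,x,y], IsUnit q ∨ q = 0) {σ : L →+* L}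
    {θ : Matrix ι ι ℍ[L,x,y] →+* Matrix ι ι ℍ[L,x,y]}
    (hθ : ∀ l, θ (algebraMap L _ l) = algebraMap L _ (σ l)) (hθ₂ : Function.Involutive θ)
    {γ : Matrix ι ι ℍ[L,x,y] ≃ₐ[L] (Matrix ι ι ℍ[L,x,y])ᵐᵒᵖ}
    (hγθ : Function.Commute (fun X => (γ X).unop) θ) :
    ∃ ψ : ℍ[L,x,y] →+* ℍ[L,x,y],
      (∀ l, ψ (algebraMap L _ l) = algebraMap L _ (σ l)) ∧ Function.Involutive ψ := by
  have := isCentral_quaternion (y := y) h2 hx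
  have := isSimpleRing_quaternion h2 hx hy
  have := isAzumaya_of_isCentral_of_isSimpleRing L (Matrix ι ι ℍ[L,x,y])
  obtain ⟨G, φ, hG⟩ : ∃ (G : (Matrix ι ι ℍ[L,x,y])ˣ) (φ : ℍ[L,x,y] →+* ℍ[L,x,y]),
      ∀ X : Matrix ι ι ℍ[L,x,y], θ X = G.val * φ.mapMatrix X * G⁻¹.val := by
    let := DivisionRing.ofIsUnitOrEqZero hdiv
    exact exists_eq_conj_mapMatrix θ
  have hφ := map_algebraMap_of_conj_mapMatrix hG hθ
  have map_star (X : Matrix ι ι ℍ[L,x,y]) : φ.mapMatrix (star X) = star (φ.mapMatrix X) := by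
    ext1 i j
    exact map_star_of_semilinear h2 hx hy hφ (X j i)
  have star_algebraMap (l : L) : star (algebraMap L (Matrix ι ι ℍ[L,x,y]) l) =
      algebraMap L (Matrix ι ι ℍ[L,x,y]) l := by
    simp [algebraMap_eq_diagonal, star_eq_conjTranspose]
  obtain ⟨H, hH⟩ := exists_unit_conj_star_of_antiautomorphism star_algebraMap γ
  obtain ⟨u, hu0, hφφ, hφu, hu⟩ := exists_scalar_eq_mul_mapMatrix hG hθ₂
  obtain ⟨Z, hZ, hnorm⟩ := exists_center_cocycle_mul_star hG hθ₂ map_star hH hγθ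
  obtain ⟨m, rfl⟩ := (Algebra.IsCentral.mem_center_iff L).1 hZ
  have hum : u * star u = algebraMap L _ (m * σ m) := by
    let i := Classical.arbitrary ι
    have hii := congrFun (congrFun hnorm i) i
    rw [← hu] at hii
    rw [map_mul, ← hφ]
    simpa [algebraMap_eq_diagonal] using hii
  exact exists_semilinear_involution hφ ((hdiv u).resolve_right hu0) hφφ hφu
    (QuaternionAlgebra.self_add_star' u) hum (hdiv _)

end MatrixInvolutions

section QuadraticExtensions

variable {K L : Type*} [Field K] [Field L] [Algebra K L]

theorem isSeparable_of_finrank_ne_zero (h : (Module.finrank K L : K) ≠ 0) :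
    Algebra.IsSeparable K L := by
  have hfin : Module.finrank K L ≠ 0 := fun h0 => h (by rw [h0, Nat.cast_zero])
  have := Module.finite_of_finrank_pos (Nat.pos_of_ne_zero hfin)
  refine ⟨fun l => ?_⟩
  have hint : IsIntegral K l := IsIntegral.of_finite K l
  rw [IsSeparable, Polynomial.separable_iff_derivative_ne_zero (minpoly.irreducible hint)]
  intro h0
  have hdeg : ((minpoly K l).natDegree : K) ≠ 0 := by
    obtain ⟨c, hc⟩ := minpoly.degree_dvd hint
    rw [hc, Nat.cast_mul] at h
    exact left_ne_zero_of_mul h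
  have hpos := minpoly.natDegree_pos hint
  have hcoeff := congrArg (fun p => p.coeff ((minpoly K l).natDegree - 1)) h0
  simp only [Polynomial.coeff_derivative, Polynomial.coeff_zero, Nat.sub_add_cancel hpos,
    (minpoly.monic hint).coeff_natDegree, one_mul] at hcoeff
  rw [← Nat.cast_add_one, Nat.sub_add_cancel hpos] at hcoeff
  exact hdeg hcoeff

theorem exists_involutive_algEquiv_of_finrank_eq_two (h2 : (2 : K) ≠ 0)
    (h : Module.finrank K L = 2) :
    ∃ σ : L ≃ₐ[K] L, Function.Involutive σ ∧ (∃ l, σ l ≠ l) ∧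
      ∀ l, σ l = l → l ∈ Set.range (algebraMap K L) := by
  have : Algebra.IsQuadraticExtension K L := ⟨h⟩
  have : Algebra.IsSeparable K L := isSeparable_of_finrank_ne_zero (by rw [h]; exact_mod_cast h2)
  have : FiniteDimensional K L := Module.finite_of_finrank_pos (by simp [h])
  have : IsGalois K L := {}
  have hcard : Nat.card (L ≃ₐ[K] L) = 2 := by rw [IsGalois.card_aut_eq_finrank, h]
  obtain ⟨σ, hσ, huniq⟩ := (Nat.card_eq_two_iff' (1 : L ≃ₐ[K] L)).1 hcard
  have hσσ : σ * σ = 1 := by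
    by_contra hne
    exact hσ (mul_eq_left.1 (huniq _ hne))
  refine ⟨σ, DFunLike.congr_fun hσσ, ?_, fun l hl => ?_⟩
  · by_contra! hfix
    exact hσ (AlgEquiv.ext hfix)
  · refine IntermediateField.mem_bot.1 ((IsGalois.mem_bot_iff_fixed l).2 fun τ => ?_)
    rcases eq_or_ne τ 1 with rfl | hτ
    · rfl
    · rw [huniq τ hτ, hl]

end QuadraticExtensions

section BaseChange

variable {K L C A : Type*} [Field K] [Field L] [Algebra K L] [Ring C] [Algebra K C] [Ring A]
  [Algebra L A]

theorem exists_semilinear_involution_commute_of_baseChange {σ : L ≃ₐ[K] L}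
    (hσ : Function.Involutive σ) (g : C ≃ₐ[K] Cᵐᵒᵖ) (e : L ⊗[K] C ≃ₐ[L] A) :
    ∃ (θ : A →+* A) (γ : A ≃ₐ[L] Aᵐᵒᵖ), (∀ l, θ (algebraMap L A l) = algebraMap L A (σ l)) ∧
      Function.Involutive θ ∧ Function.Commute (fun a => (γ a).unop) θ := by
  let θ₀ : L ⊗[K] C ≃ₐ[K] L ⊗[K] C := Algebra.TensorProduct.congr σ AlgEquiv.refl
  let γ₀ : L ⊗[K] C ≃ₐ[L] (L ⊗[K] C)ᵐᵒᵖ :=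
    (Algebra.TensorProduct.congr (AlgEquiv.toOpposite L L) g).trans
      (Algebra.TensorProduct.opAlgEquiv K L L C)
  have θ₀_involutive (z) : θ₀ (θ₀ z) = z := by
    induction z with
    | zero => simp only [map_zero]
    | tmul l c => exact congrArg (· ⊗ₜ[K] c) (hσ l)
    | add u v hu hv => rw [map_add, map_add, hu, hv]
  have γ₀_θ₀ (z) : (γ₀ (θ₀ z)).unop = θ₀ (γ₀ z).unop := by
    induction z with
    | zero => simp only [map_zero, MulOpposite.unop_zero]
    | tmul l c => rfl
    | add u v hu hv => simp only [map_add, MulOpposite.unop_add, hu, hv]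
  refine ⟨(e : L ⊗[K] C →+* A).comp ((θ₀ : L ⊗[K] C →+* L ⊗[K] C).comp (e.symm : A →+* L ⊗[K] C)),
    (e.symm.trans γ₀).trans (AlgEquiv.op e), fun l => ?_, fun a => ?_, fun a => ?_⟩
  · change e (θ₀ (e.symm (algebraMap L A l))) = _
    rw [AlgEquiv.commutes, ← AlgEquiv.commutes e]
    exact congrArg e (by simp [θ₀, Algebra.TensorProduct.algebraMap_apply])
  · change e (θ₀ (e.symm (e (θ₀ (e.symm a))))) = a
    rw [e.symm_apply_apply, θ₀_involutive, e.apply_symm_apply]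
  · change e (γ₀ (e.symm (e (θ₀ (e.symm a))))).unop = e (θ₀ (e.symm (e (γ₀ (e.symm a)).unop)))
    rw [e.symm_apply_apply, e.symm_apply_apply, γ₀_θ₀]

end BaseChange

/-- Let `K` be a field of characteristic different from `2` and `L/K` a
quadratic field extension.  Let `B` be a central simple `K`-algebra whose Brauer class is
`2`-torsion, and suppose that `B ⊗_K L` is Brauer-equivalent to a quaternion algebra over `L`.
Then there are `a, b ∈ K^×` such that `(a,b)_L = (a,b)_K ⊗_K L` is Brauer-equivalent
to `B ⊗_K L`. -/
theorem quaternion_class_descends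
    (K L : Type) [Field K] [Field L] [Algebra K L]
    (hchar : ringChar K ≠ 2) (hquad : Module.finrank K L = 2)
    (B : Type) [Ring B] [Algebra K B] [FiniteDimensional K B]
    [Algebra.IsCentral K B] [IsSimpleRing B]
    (htors : BrauerEquivalent K (B ⊗[K] B) K)
    (x y : L) (hx : x ≠ 0) (hy : y ≠ 0)
    (hquat : BrauerEquivalent L (L ⊗[K] B) ℍ[L, x, y]) :
    ∃ a b : K, a ≠ 0 ∧ b ≠ 0 ∧
      BrauerEquivalent L (L ⊗[K] ℍ[K, a, b]) (L ⊗[K] B) := by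
  have h2 : (2 : K) ≠ 0 := Ring.two_ne_zero hchar
  have h2L : (2 : L) ≠ 0 := by
    rw [← map_ofNat (algebraMap K L) 2]
    exact (map_ne_zero _).2 h2
  obtain ⟨n, m, hn, hm, ⟨e⟩⟩ := hquat
  suffices ∃ a b : K, a ≠ 0 ∧ b ≠ 0 ∧ Nonempty (L ⊗[K] ℍ[K,a,b] ≃ₐ[L] ℍ[L,x,y]) by
    obtain ⟨a, b, ha, hb, ⟨f⟩⟩ := this
    exact ⟨a, b, ha, hb, m, n, hm, hn, ⟨f.mapMatrix.trans e.symm⟩⟩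
  rcases forall_isUnit_or_eq_zero_or_nonempty_split (K := K) h2L hx hy with hdiv | hsplit
  · have := isAzumaya_of_isCentral_of_isSimpleRing K B
    obtain ⟨σ, hσ₂, hσ_ne, hσ⟩ := exists_involutive_algEquiv_of_finrank_eq_two h2 hquad
    obtain ⟨s, hs, ⟨g⟩⟩ := exists_matrix_algEquiv_op htors
    obtain ⟨E⟩ := nonempty_baseChange_matrix_matrix_algEquiv (μ := Fin s) e
    have : Nonempty (Fin s × Fin m) := ⟨(⟨0, hs⟩, ⟨0, hm⟩)⟩
    obtain ⟨θ, γ, hθ, hθ₂, hγθ⟩ := exists_semilinear_involution_commute_of_baseChange hσ₂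
      (g.mapMatrix.trans AlgEquiv.mopMatrix) E
    obtain ⟨ψ, hψ, hψ₂⟩ := exists_semilinear_involution_of_matrix h2L hx hy hdiv
      (σ := (σ : L →+* L)) hθ hθ₂ hγθ
    exact nonempty_baseChange_quaternion_algEquiv_of_involution h2L hx hy hdiv
      (σ := (σ : L →+* L)) hσ_ne hσ hψ hψ₂
  · exact ⟨1, 1, one_ne_zero, one_ne_zero, hsplit⟩
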